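/- Let m ≥ 1, let A be a real m×m matrix all of whose characteristic-polynomial roots are real and strictly positive, let λ ≥ 0 be a real number and q ≥ 0 an integer with λ > 0 or q ≥ 1, and let p : ℝ^m → ℝ be a homogeneous polynomial function of degree q. Then there exists a unique homogeneous polynomial function u : ℝ^m → ℝ of degree q such that λ·u(x) + ⟨A x, ∇u(x)⟩ = p(x) for all x ∈ ℝ^m. -/

import Mathlib

/-- The `i`-th component of the Euclidean gradient of `u : ℝ^m → ℝ` at `x`. -/
noncomputable def grad {m : ℕ} (u : (Fin m → ℝ) → ℝ) (x : Fin m → ℝ) (i : Fin m) : ℝ :=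
  fderiv ℝ u x (Pi.single i 1)

/-- `u : ℝ^m → ℝ` is a polynomial function: it is given by a multivariate real
polynomial in the coordinates. -/
def IsPolyFun {m : ℕ} (u : (Fin m → ℝ) → ℝ) : Prop :=
  ∃ P : MvPolynomial (Fin m) ℝ, ∀ x, u x = MvPolynomial.eval x P

/-!
On polynomials the equation reads `λ U + D U = P`, where `D = ⟨A x, ∇⟩` is a derivation preserving
each degree. On linear forms `D` acts as the transpose of `A`, so the coordinates are sums of
generalized eigenvectors of `D` for eigenvalues of `A`. By the Leibniz rule a product of generalized
eigenvectors for `μ` and `ν` is one for `μ + ν`; hence in degree `q` the only eigenvalues of `D` are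
sums of `q` eigenvalues of `A`. If `-λ` is not such a sum, `λ + D` is injective on the
finite-dimensional space of forms of degree `q`, hence bijective. When the eigenvalues of `A` have
positive real part, so do their sums of positive length, and these avoid `-λ`.
-/

open MvPolynomial

section SpectralSubspace

variable {R V W : Type*} [CommRing R] [AddCommGroup V] [Module R V] [AddCommGroup W] [Module R W]

lemma maxGenEigenspace_le_comap_of_comp_eq {f : Module.End R V} {g : Module.End R W}
    {φ : V →ₗ[R] W} (h : g ∘ₗ φ = φ ∘ₗ f) (μ : R) :
    f.maxGenEigenspace μ ≤ (g.maxGenEigenspace μ).comap φ := by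
  intro v hv
  obtain ⟨k, hk⟩ := (f.mem_maxGenEigenspace μ v).mp hv
  have hsub : (g - μ • 1) ∘ₗ φ = φ ∘ₗ (f - μ • 1) := by
    rw [LinearMap.sub_comp, LinearMap.comp_sub, h]
    ext
    simp
  have hpow := LinearMap.congr_fun (Module.End.commute_pow_left_of_commute hsub k) v
  refine (g.mem_maxGenEigenspace μ (φ v)).mpr ⟨k, ?_⟩
  simpa only [LinearMap.comp_apply, hk, map_zero] using hpow

/-- The spectral subspace of `f` attached to a set `S` of scalars: the sum of the generalized
eigenspaces of `f` for the eigenvalues in `S`. -/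
noncomputable def spectralSubspace (f : Module.End R V) (S : Set R) : Submodule R V :=
  ⨆ μ ∈ S, f.maxGenEigenspace μ

lemma maxGenEigenspace_le_spectralSubspace (f : Module.End R V) {S : Set R} {μ : R} (hμ : μ ∈ S) :
    f.maxGenEigenspace μ ≤ spectralSubspace f S :=
  le_biSup f.maxGenEigenspace hμ

lemma spectralSubspace_le_comap_of_comp_eq {f : Module.End R V} {g : Module.End R W}
    {φ : V →ₗ[R] W} (h : g ∘ₗ φ = φ ∘ₗ f) (S : Set R) :
    spectralSubspace f S ≤ (spectralSubspace g S).comap φ :=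
  iSup₂_le fun μ hμ => (maxGenEigenspace_le_comap_of_comp_eq h μ).trans
    (Submodule.comap_mono (maxGenEigenspace_le_spectralSubspace g hμ))

lemma spectralSubspace_spectrum_eq_top {K V : Type*} [Field K] [IsAlgClosed K]
    [AddCommGroup V] [Module K V] [FiniteDimensional K V] (f : Module.End K V) :
    spectralSubspace f (spectrum K f) = ⊤ := by
  rw [eq_top_iff, ← Module.End.iSup_maxGenEigenspace_eq_top f]
  refine iSup_le fun μ => ?_
  by_cases hμ : f.HasEigenvalue μ
  · exact maxGenEigenspace_le_spectralSubspace f hμ.mem_spectrum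
  · have hbot : f.maxGenEigenspace μ = ⊥ := by
      by_contra hne
      exact hμ (Module.End.HasUnifEigenvalue.lt zero_lt_one (k := ⊤) hne)
    rw [hbot]
    exact bot_le

end SpectralSubspace

section NfoldSums

variable {M : Type*} [AddCommMonoid M]

/-- The set of sums of `n` elements of `S`, repetitions allowed. For the eigenvalues `S` of a
matrix, these contain the eigenvalues of the induced derivation on forms of degree `n`. The
pointwise `n • S` is avoided because it can also denote the dilation of `S` by `n`. -/
def nfoldSums (S : Set M) (n : ℕ) : Set M :=
  Multiset.sum '' {s : Multiset M | s.card = n ∧ ∀ μ ∈ s, μ ∈ S}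

lemma zero_mem_nfoldSums_zero (S : Set M) : 0 ∈ nfoldSums S 0 :=
  ⟨0, by simp⟩

lemma add_mem_nfoldSums_succ {S : Set M} {n : ℕ} {μ ν : M}
    (hμ : μ ∈ nfoldSums S n) (hν : ν ∈ S) : μ + ν ∈ nfoldSums S (n + 1) := by
  obtain ⟨s, ⟨hcard, hs⟩, rfl⟩ := hμ
  exact ⟨ν ::ₘ s, ⟨by simp [hcard], by simpa using ⟨hν, hs⟩⟩, by simp [add_comm]⟩

lemma neg_notMem_nfoldSums_of_re_pos {S : Set ℂ} (hS : ∀ z ∈ S, 0 < z.re) {c : ℂ}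
    (hc : 0 ≤ c.re) {n : ℕ} (h : 0 < c.re ∨ 1 ≤ n) : -c ∉ nfoldSums S n := by
  rintro ⟨s, ⟨rfl, hs⟩, hsum⟩
  have hre : s.sum.re = -c.re := by rw [hsum, Complex.neg_re]
  rcases eq_or_ne s 0 with rfl | hne
  · have hcpos : 0 < c.re := by simpa using h
    rw [Multiset.sum_zero, Complex.zero_re] at hre
    linarith
  · have hpos : 0 < s.sum.re :=
      Multiset.sum_induction_nonempty (fun z => 0 < z.re) (fun _ _ => add_pos) hne
        (fun z hz => hS z (hs z hz))
    linarith

end NfoldSums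

section Derivation

lemma derivation_sum_apply {R B N ι : Type*} [CommSemiring R] [CommSemiring B] [Algebra R B]
    [AddCommMonoid N] [Module R N] [Module B N] (s : Finset ι) (D : ι → Derivation R B N) (b : B) :
    (∑ i ∈ s, D i) b = ∑ i ∈ s, D i b :=
  (congrFun (map_sum Derivation.coeFnAddMonoidHom D s) b).trans (Finset.sum_apply ..)

variable {R B : Type*} [CommRing R] [CommRing B] [Algebra R B] (D : Derivation R B B)

lemma derivation_sub_smul_one_mul (μ ν : R) (f g : B) :
    ((D : Module.End R B) - (μ + ν) • 1) (f * g) =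
      ((D : Module.End R B) - μ • 1) f * g + f * ((D : Module.End R B) - ν • 1) g := by
  simp only [add_smul, LinearMap.sub_apply, LinearMap.add_apply, LinearMap.smul_apply,
    Module.End.one_apply, Derivation.coeFn_coe, Derivation.leibniz, smul_eq_mul, sub_mul, mul_sub,
    smul_mul_assoc, mul_smul_comm, mul_comm g]
  abel

lemma derivation_sub_smul_one_pow_mul_eq_zero {μ ν : R} {a b : ℕ} {f g : B}
    (hf : (((D : Module.End R B) - μ • 1) ^ a) f = 0)
    (hg : (((D : Module.End R B) - ν • 1) ^ b) g = 0) :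
    (((D : Module.End R B) - (μ + ν) • 1) ^ (a + b)) (f * g) = 0 := by
  induction a generalizing f b g with
  | zero =>
    have hf0 : f = 0 := hf
    rw [hf0, zero_mul, map_zero]
  | succ a iha =>
    induction b generalizing g with
    | zero =>
      have hg0 : g = 0 := hg
      rw [hg0, mul_zero, map_zero]
    | succ b ihb =>
      have hleft := iha (by rwa [pow_succ] at hf) hg
      have hright := ihb (by rwa [pow_succ] at hg)
      rw [← add_assoc, pow_succ, Module.End.mul_apply, derivation_sub_smul_one_mul, map_add,
        hright, add_zero, add_right_comm, add_assoc]
      exact hleft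

lemma maxGenEigenspace_derivation_mul_le (μ ν : R) :
    Module.End.maxGenEigenspace (D : Module.End R B) μ *
        Module.End.maxGenEigenspace (D : Module.End R B) ν ≤
      Module.End.maxGenEigenspace (D : Module.End R B) (μ + ν) := by
  refine Submodule.mul_le.mpr fun f hf g hg => ?_
  obtain ⟨a, ha⟩ := (Module.End.mem_maxGenEigenspace _ _ _).mp hf
  obtain ⟨b, hb⟩ := (Module.End.mem_maxGenEigenspace _ _ _).mp hg
  exact (Module.End.mem_maxGenEigenspace _ _ _).mpr
    ⟨a + b, derivation_sub_smul_one_pow_mul_eq_zero D ha hb⟩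

lemma spectralSubspace_derivation_pow_le (S : Set R) (n : ℕ) :
    spectralSubspace (D : Module.End R B) S ^ n ≤
      spectralSubspace (D : Module.End R B) (nfoldSums S n) := by
  induction n with
  | zero =>
    rw [pow_zero, Submodule.one_le]
    refine maxGenEigenspace_le_spectralSubspace _ (zero_mem_nfoldSums_zero S) ?_
    exact (Module.End.mem_maxGenEigenspace _ _ _).mpr ⟨1, by simp⟩
  | succ n ih =>
    rw [pow_succ]
    refine (mul_le_mul_left ih _).trans ?_
    simp only [spectralSubspace, Submodule.iSup_mul, Submodule.mul_iSup, iSup_le_iff]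
    intro ν hν μ hμ
    exact (maxGenEigenspace_derivation_mul_le D _ _).trans
      (maxGenEigenspace_le_spectralSubspace _ (add_mem_nfoldSums_succ hμ hν))

end Derivation

section LinearDerivation

variable {σ R : Type*} [Fintype σ]

/-- The derivation `P ↦ ⟨A x, ∇P⟩` of the polynomial ring, that is, the linear vector field
`x ↦ A x` acting on polynomials. -/
noncomputable def linearDerivation [CommSemiring R] (A : Matrix σ σ R) :
    Derivation R (MvPolynomial σ R) (MvPolynomial σ R) :=
  mkDerivation R A.toMvPolynomial

lemma linearDerivation_eq_sum [CommSemiring R] (A : Matrix σ σ R) (P : MvPolynomial σ R) :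
    linearDerivation A P = ∑ i, A.toMvPolynomial i * pderiv i P := by
  classical
  have h : linearDerivation A = ∑ i, A.toMvPolynomial i • pderiv i := derivation_ext fun j => by
    simp [linearDerivation, mkDerivation_X, derivation_sum_apply, pderiv_X, Pi.single_apply]
  simp only [h, derivation_sum_apply, Derivation.smul_apply, smul_eq_mul]

lemma map_linearDerivation {S : Type*} [CommSemiring R] [CommSemiring S] (φ : R →+* S)
    (A : Matrix σ σ R) (P : MvPolynomial σ R) :
    linearDerivation (A.map φ) (map φ P) = map φ (linearDerivation A P) := by
  simp only [linearDerivation_eq_sum, map_sum, map_mul, Matrix.toMvPolynomial_map, pderiv_map]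

lemma isHomogeneous_linearDerivation [CommSemiring R] (A : Matrix σ σ R) {n : ℕ}
    {P : MvPolynomial σ R} (hP : P.IsHomogeneous n) : (linearDerivation A P).IsHomogeneous n := by
  cases n with
  | zero =>
    rw [← totalDegree_zero_iff_isHomogeneous, totalDegree_eq_zero_iff_eq_C] at hP
    rw [hP, derivation_C]
    exact isHomogeneous_zero ..
  | succ n =>
    rw [linearDerivation_eq_sum]
    refine IsHomogeneous.sum _ _ _ fun i _ => ?_
    rw [add_comm n 1]
    exact (A.toMvPolynomial_isHomogeneous i).mul hP.pderiv

lemma linearDerivation_comp_linearCombination_X [CommRing R] [DecidableEq σ] (A : Matrix σ σ R) :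
    (linearDerivation A : Module.End R (MvPolynomial σ R)) ∘ₗ Fintype.linearCombination R X =
      Fintype.linearCombination R X ∘ₗ Matrix.toLin' A.transpose := by
  refine LinearMap.pi_ext' fun i => LinearMap.ext_ring ?_
  simp only [linearDerivation, LinearMap.coe_comp, Derivation.coeFn_coe, LinearMap.coe_single,
    Function.comp_apply, Fintype.linearCombination_apply_single, one_smul, mkDerivation_X,
    Matrix.toMvPolynomial, Matrix.toLin'_apply, Matrix.mulVec_single, MulOpposite.op_one,
    Matrix.col_transpose]
  simp [Fintype.linearCombination_apply, X, smul_monomial]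

variable {K L : Type*} [Field K] [Field L] [IsAlgClosed L] [DecidableEq σ]

lemma X_mem_spectralSubspace (A : Matrix σ σ L) (i : σ) :
    X i ∈ spectralSubspace (linearDerivation A : Module.End L (MvPolynomial σ L))
      (spectrum L A) := by
  have hspec : spectrum L (Matrix.toLin' A.transpose) = spectrum L A := by
    ext μ
    rw [Matrix.spectrum_toLin', Matrix.mem_spectrum_iff_isRoot_charpoly,
      Matrix.mem_spectrum_iff_isRoot_charpoly, Matrix.charpoly_transpose]
  have hle := spectralSubspace_le_comap_of_comp_eq
    (linearDerivation_comp_linearCombination_X A) (spectrum L A)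
  have htop := spectralSubspace_spectrum_eq_top (Matrix.toLin' A.transpose)
  rw [← hspec] at hle ⊢
  rw [htop] at hle
  simpa using hle (Submodule.mem_top (x := Pi.single i 1))

lemma homogeneousSubmodule_le_spectralSubspace (A : Matrix σ σ L) (n : ℕ) :
    homogeneousSubmodule σ L n ≤
      spectralSubspace (linearDerivation A : Module.End L (MvPolynomial σ L))
        (nfoldSums (spectrum L A) n) := by
  have hone : homogeneousSubmodule σ L 1 ≤
      spectralSubspace (linearDerivation A : Module.End L (MvPolynomial σ L)) (spectrum L A) := by
    rw [homogeneousSubmodule_one_eq_span_X, Submodule.span_le, Set.range_subset_iff]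
    exact X_mem_spectralSubspace A
  rw [← homogeneousSubmodule_one_pow]
  exact (pow_le_pow_left' hone n).trans (spectralSubspace_derivation_pow_le _ _ n)

lemma eq_zero_of_linearDerivation_eq_smul_of_isAlgClosed {A : Matrix σ σ L} {c : L}
    {n : ℕ} (hc : c ∉ nfoldSums (spectrum L A) n) {P : MvPolynomial σ L}
    (hP : P.IsHomogeneous n) (h : linearDerivation A P = c • P) : P = 0 := by
  have hmem : P ∈ Module.End.maxGenEigenspace
      (linearDerivation A : Module.End L (MvPolynomial σ L)) c :=
    Module.End.eigenspace_le_maxGenEigenspace (Module.End.mem_eigenspace_iff.mpr h)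
  exact Submodule.disjoint_def.mp
    ((Module.End.independent_maxGenEigenspace _).disjoint_biSup hc) P hmem
    (homogeneousSubmodule_le_spectralSubspace A n hP)

lemma eq_zero_of_linearDerivation_eq_smul [CommRing R] [Algebra R L] [FaithfulSMul R L]
    {A : Matrix σ σ R} {c : R} {n : ℕ}
    (hc : algebraMap R L c ∉ nfoldSums (spectrum L (A.map (algebraMap R L))) n)
    {P : MvPolynomial σ R} (hP : P.IsHomogeneous n) (h : linearDerivation A P = c • P) :
    P = 0 := by
  refine map_injective _ (FaithfulSMul.algebraMap_injective R L) ?_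
  rw [map_zero]
  refine eq_zero_of_linearDerivation_eq_smul_of_isAlgClosed hc (hP.map _) ?_
  rw [map_linearDerivation, h, smul_eq_C_mul, smul_eq_C_mul, map_mul, map_C]

variable [Algebra K L]

theorem existsUnique_isHomogeneous_smul_add_linearDerivation_eq {A : Matrix σ σ K} {c : K} {n : ℕ}
    (hc : -algebraMap K L c ∉ nfoldSums (spectrum L (A.map (algebraMap K L))) n)
    {P : MvPolynomial σ K} (hP : P.IsHomogeneous n) :
    ∃! U : MvPolynomial σ K, U.IsHomogeneous n ∧ c • U + linearDerivation A U = P := by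
  let T : Module.End K (MvPolynomial σ K) := c • 1 + linearDerivation A
  have hT : ∀ U ∈ homogeneousSubmodule σ K n, T U ∈ homogeneousSubmodule σ K n := fun U hU =>
    Submodule.add_mem _ (Submodule.smul_mem _ c hU) (isHomogeneous_linearDerivation A hU)
  have hker (U : MvPolynomial σ K) (hU : U.IsHomogeneous n) (hTU : T U = 0) : U = 0 :=
    eq_zero_of_linearDerivation_eq_smul (L := L) (c := -c) (by rwa [map_neg]) hU
      ((eq_neg_of_add_eq_zero_right hTU).trans (neg_smul c U).symm)
  have hinj : Function.Injective (T.restrict hT) :=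
    (injective_iff_map_eq_zero _).mpr fun U hU =>
      Subtype.ext (hker U U.2 (congrArg Subtype.val hU))
  have : FiniteDimensional K (homogeneousSubmodule σ K n) :=
    Module.Finite.iff_fg.mpr (homogeneousSubmodule_fg σ K n)
  have hbij : Function.Bijective (T.restrict hT) :=
    ⟨hinj, LinearMap.injective_iff_surjective.mp hinj⟩
  obtain ⟨U, hU, hunique⟩ := hbij.existsUnique ⟨P, hP⟩
  exact ⟨U, ⟨U.2, congrArg Subtype.val hU⟩, fun V ⟨hV, hVP⟩ =>
    congrArg Subtype.val (hunique ⟨V, hV⟩ (Subtype.ext hVP))⟩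

end LinearDerivation

section PolynomialFunctions

lemma eval_smul_of_isHomogeneous {σ R : Type*} [CommSemiring R] {n : ℕ} {P : MvPolynomial σ R}
    (hP : P.IsHomogeneous n) (s : R) (x : σ → R) : eval (s • x) P = s ^ n * eval x P := by
  rw [eval_eq, eval_eq, Finset.mul_sum]
  refine Finset.sum_congr rfl fun d hd => ?_
  simp only [Pi.smul_apply, smul_eq_mul, mul_pow, Finset.prod_mul_distrib]
  rw [Finset.prod_pow_eq_pow_sum, ← hP.degree_eq_sum_deg_support hd, mul_left_comm]

lemma isHomogeneous_iff_eval_smul {σ R : Type*} [CommRing R] [IsDomain R] [Infinite R] {n : ℕ}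
    {P : MvPolynomial σ R} :
    P.IsHomogeneous n ↔ ∀ (s : R) (x : σ → R), eval (s • x) P = s ^ n * eval x P := by
  refine ⟨eval_smul_of_isHomogeneous, fun h => ?_⟩
  suffices homogeneousComponent n P = P from this ▸ homogeneousComponent_isHomogeneous n P
  refine MvPolynomial.funext fun x => ?_
  let F : Polynomial R := ∑ i ∈ Finset.range (P.totalDegree + 1),
    Polynomial.monomial i (eval x (homogeneousComponent i P))
  have hF : F = Polynomial.monomial n (eval x P) := by
    refine Polynomial.funext fun s => ?_
    rw [Polynomial.eval_monomial, mul_comm, ← h, ← sum_homogeneousComponent P, map_sum,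
      Polynomial.eval_finsetSum]
    refine Finset.sum_congr rfl fun i _ => ?_
    rw [Polynomial.eval_monomial, mul_comm,
      eval_smul_of_isHomogeneous (homogeneousComponent_isHomogeneous i P)]
  have hcoeff : F.coeff n = eval x (homogeneousComponent n P) := by
    simp only [F, Polynomial.finsetSum_coeff, Polynomial.coeff_monomial, Finset.sum_ite_eq',
      Finset.mem_range, Order.lt_add_one_iff, ite_eq_left_iff, not_le]
    intro hn
    rw [homogeneousComponent_eq_zero _ _ hn, map_zero]
  rw [← hcoeff, hF, Polynomial.coeff_monomial_same]

lemma fderiv_eval_single {σ 𝕜 : Type*} [Finite σ] [DecidableEq σ] [NontriviallyNormedField 𝕜]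
    (P : MvPolynomial σ 𝕜) (x : σ → 𝕜) (i : σ) :
    fderiv 𝕜 (fun y => eval y P) x (Pi.single i 1) = eval x (pderiv i P) := by
  have := Fintype.ofFinite σ
  have hdiff (Q : MvPolynomial σ 𝕜) : DifferentiableAt 𝕜 (fun y => eval y Q) x := by
    simpa using (AnalyticAt.aeval_mvPolynomial (A := 𝕜)
      (fun j => (ContinuousLinearMap.proj (R := 𝕜) (φ := fun _ : σ => 𝕜) j).analyticAt x)
      Q).differentiableAt
  induction P using MvPolynomial.induction_on with
  | C a => simp
  | add P Q hP hQ =>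
    simp only [map_add]
    rw [fderiv_fun_add (hdiff P) (hdiff Q), add_apply, hP, hQ]
  | mul_X P j hP =>
    simp only [map_mul, eval_X]
    rw [fderiv_fun_mul (hdiff P) (differentiableAt_apply j x)]
    simp [hP, fderiv_apply, Derivation.leibniz, pderiv_X, Pi.single_apply, eq_comm, apply_ite]

lemma mul_eval_add_sum_mulVec_mul_grad {m : ℕ} (A : Matrix (Fin m) (Fin m) ℝ) (c : ℝ)
    (P : MvPolynomial (Fin m) ℝ) (x : Fin m → ℝ) :
    c * eval x P + ∑ i, A.mulVec x i * grad (fun y => eval y P) x i =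
      eval x (c • P + linearDerivation A P) := by
  simp only [grad, fderiv_eval_single, linearDerivation_eq_sum, map_add, smul_eval, map_sum,
    map_mul, Matrix.toMvPolynomial_eval_eq_apply]

end PolynomialFunctions

lemma mem_spectrum_map_iff_mem_roots_map_charpoly {σ R L : Type*} [Fintype σ] [DecidableEq σ]
    [CommRing R] [Field L] [Algebra R L] {A : Matrix σ σ R} {μ : L} :
    μ ∈ spectrum L (A.map (algebraMap R L)) ↔ μ ∈ (A.charpoly.map (algebraMap R L)).roots := by
  rw [Matrix.mem_spectrum_iff_isRoot_charpoly, Matrix.charpoly_map,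
    Polynomial.mem_roots (A.charpoly_monic.map _).ne_zero]

theorem stmt0_general (m : ℕ) (A : Matrix (Fin m) (Fin m) ℝ) (lam : ℝ) (q : ℕ)
    (hres : -(lam : ℂ) ∉ nfoldSums (spectrum ℂ (A.map (algebraMap ℝ ℂ))) q)
    (p : (Fin m → ℝ) → ℝ) (hp : IsPolyFun p)
    (hphom : ∀ (s : ℝ) (x : Fin m → ℝ), p (s • x) = s ^ q * p x) :
    ∃! u : (Fin m → ℝ) → ℝ,
      IsPolyFun u ∧ (∀ (s : ℝ) (x : Fin m → ℝ), u (s • x) = s ^ q * u x) ∧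
        ∀ x, lam * u x + ∑ i, A.mulVec x i * grad u x i = p x := by
  obtain ⟨P, hP⟩ := hp
  obtain rfl : p = fun x => eval x P := funext hP
  obtain ⟨U, ⟨hU, hUP⟩, hunique⟩ := existsUnique_isHomogeneous_smul_add_linearDerivation_eq hres
    (isHomogeneous_iff_eval_smul.mpr hphom)
  refine ⟨fun x => eval x U,
    ⟨⟨U, fun _ => rfl⟩, isHomogeneous_iff_eval_smul.mp hU, fun x => ?_⟩, ?_⟩
  · rw [mul_eval_add_sum_mulVec_mul_grad, hUP]
  · rintro v ⟨⟨V, hV⟩, hvhom, hveq⟩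
    obtain rfl : v = fun x => eval x V := funext hV
    have hVP : lam • V + linearDerivation A V = P := MvPolynomial.funext fun x => by
      rw [← mul_eval_add_sum_mulVec_mul_grad, hveq]
    rw [hunique V ⟨isHomogeneous_iff_eval_smul.mpr hvhom, hVP⟩]

/-- paper's Lemma 3.1(i): if all roots of the characteristic polynomial of
`A` are real and strictly positive, `λ ≥ 0`, `q ≥ 0` with `λ > 0` or `q ≥ 1`, and `p` is a
homogeneous polynomial function of degree `q`, then there is a unique homogeneous polynomial
function `u` of degree `q` with `λ·u(x) + ⟨A x, ∇u(x)⟩ = p(x)` for all `x`. -/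
theorem stmt0 (m : ℕ) (hm : 1 ≤ m) (A : Matrix (Fin m) (Fin m) ℝ)
    (hA : ∀ z ∈ (Polynomial.map (algebraMap ℝ ℂ) A.charpoly).roots, z.im = 0 ∧ 0 < z.re)
    (lam : ℝ) (hlam : 0 ≤ lam) (q : ℕ) (hq : 0 < lam ∨ 1 ≤ q)
    (p : (Fin m → ℝ) → ℝ) (hp : IsPolyFun p)
    (hphom : ∀ (s : ℝ) (x : Fin m → ℝ), p (s • x) = s ^ q * p x) :
    ∃! u : (Fin m → ℝ) → ℝ,
      IsPolyFun u ∧ (∀ (s : ℝ) (x : Fin m → ℝ), u (s • x) = s ^ q * u x) ∧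
        ∀ x, lam * u x + ∑ i, A.mulVec x i * grad u x i = p x := by
  exact stmt0_general m A lam q (neg_notMem_nfoldSums_of_re_pos
    (fun z hz => (hA z (mem_spectrum_map_iff_mem_roots_map_charpoly.mp hz)).2) hlam hq) p hp hphom
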